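/- **Language.** Let $\mathcal C$ be a set of nominal constants and $\mathcal P$ a set of predicate constants with arities. Formulae are built from atomic formulae $\varphi o_1\dots o_n$ and (primitive) negative predications $-\varphi o_1\dots o_n$ ($o_i$ nominal constants or variables) and $\bot$ by $\&,\vee,\supset,\forall,\exists$. For finite $Q\subseteq\mathcal P$, $o_1 \overset{+}{=}_Q o_2$ abbreviates the conjunction over $\varphi\in Q$ of the formulae $\forall z_1\dots\forall z_n\bigwedge_j(\varphi z_1..o_1..z_n\leftrightarrow\varphi z_1..o_2..z_n)$ ($o_1$, $o_2$ at place $j$; an empty conjunction is $\bot\supset\bot$), and $o_1\overset{-}{=}_Q o_2$ the same with $-\varphi$ for $\varphi$. For atomic formulae $\varphi(x),\psi(x)$ containing $x$, $\psi(\iota_Q x\varphi(x))$ abbreviates $\exists x\varphi(x)\ \&\ \forall u\forall v((\varphi(u)\&\varphi(v))\supset u\overset{+}{=}_Q v)\ \&\ \forall w(\varphi(w)\supset\psi(w))$, and $\psi(\iota_Q x{-}\varphi(x))$ the same with $-\varphi$ for $\varphi$ and $\overset{-}{=}_Q$ for $\overset{+}{=}_Q$; likewise with $-\psi$ for $\psi$.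 **System.** A subatomic base assigns to each $\tau\in\mathcal C\cup\mathcal P$ a set $\tau\Gamma$ of atomic sentences containing $\tau$. Derivations are (well-founded) trees whose leaves are labelled assumptions of formulae or term assumptions $\tau\Gamma$, built by: (i) the natural deduction rules for $\&,\vee,\supset,\forall,\exists$ and $\bot$i (from $\bot$ infer any formula), where the minor premisses and the conclusion of $\vee$E and $\exists$E may be term assumptions, and $\forall$I infers $\forall xA$ either from one premiss $A(x/o)$, with $o$ a variable or nominal constant, or from the premisses $A(x/\alpha)$ for all $\alpha\in\mathcal C$; in one-premiss $\forall$I and in $\exists$E the term $o$ obeys the usual eigenvariable conditions and, if it is a constant, has no term assumption leaf $o\Gamma$ in the derivation of the premiss (in $\exists$E: of the minor premiss); (ii) $as$I: from $\varphi\Gamma,\alpha_1\Gamma,\dots,\alpha_n\Gamma$ infer $\varphi\alpha_1\dots\alpha_n$, if this atomic sentence is in $\varphi\Gamma\cap\alpha_1\Gamma\cap\dots\cap\alpha_n\Gamma$; $-as$I: infer $-\varphi\alpha_1\dots\alpha_n$ from the same premisses, if it is not; $as$E, $-as$E: from $\pm\varphi\alpha_1\dots\alpha_n$ infer any of $\varphi\Gamma,\alpha_1\Gamma,\dots,\alpha_n\Gamma$;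 (iii) call $\varphi(\alpha),\varphi(\beta)$ mirror atomic sentences if $\alpha$ occurs in the former and the latter results from the former by exchanging $\alpha$ and $\beta$ at all places; $\overset{+}{=}_Q$I: infer $\alpha\overset{+}{=}_Q\beta$ from derivations, for all $\varphi\in Q$ and all mirror atomic sentences $\varphi(\alpha),\varphi(\beta)$, of each from the other, the latter assumption being discharged; $\overset{+}{=}_Q$E: from $\alpha\overset{+}{=}_Q\beta$ (major premiss) and one of two such sentences ($\varphi\in Q$) infer the other; the same for $\overset{-}{=}_Q$ with $-\varphi$ for $\varphi$; (iv) $\iota_Q$I: infer $\psi(\iota_Q x\varphi(x))$ from its three conjuncts; $\iota_Q$E1–3: from it infer any of them; the same for the three variants with $-\varphi$ or $-\psi$. **Normality.** A derivation is normal if in it no major premiss of an elimination rule is the conclusion of an introduction rule, of $\bot$i, of $\vee$E or of $\exists$E, and every application of $\vee$E or $\exists$E discharges at least one assumption in the derivation of each of its minor premisses. ($\bot$i itself counts neither as an introduction nor as an elimination rule.) The subformulae of a formula are the members of the smallest set that contains it and is closed under immediate subformulae, those of $\forall xB$ and $\exists xB$ being all the instances $B(x/o)$, $o$ a nominal constant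 or variable. **Subformula property.** If $\mathcal D$ is a normal derivation of a formula $A$ whose open assumptions of formulae all belong to the set $\Gamma$ of formulae (term assumptions may occur as leaves), then every formula occurring in $\mathcal D$ is a subformula of some formula in $\Gamma\cup\{A\}$. -/

import Mathlib

namespace QDef

/-- The non-logical vocabulary: nominal constants, predicate constants and their arities. -/
structure Sig : Type 1 where
  Const : Type
  Pred : Type
  arity : Pred → ℕ

/-- Nominal terms in the scope of `n` quantifiers: nominal constants, free nominal variables
(named by numbers), and variables bound by one of the `n` surrounding quantifiers
(`bvar 0` belongs to the innermost one). -/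
inductive Tm (S : Sig) (n : ℕ) : Type where
  | const (c : S.Const)
  | fvar (x : ℕ)
  | bvar (i : Fin n)

/-- Polarity: `pos` for predication and `neg` for predication failure. -/
inductive Pol : Type where
  | pos
  | neg

/-- Formulae in the scope of `n` quantifiers. `pred .pos p o` is the atomic formula `p o₁ … oₖ`,
`pred .neg p o` is the negative predication `−p o₁ … oₖ`. -/
inductive Fm (S : Sig) : ℕ → Type where
  | pred {n : ℕ} (s : Pol) (p : S.Pred) (args : Fin (S.arity p) → Tm S n) : Fm S n
  | bot {n : ℕ} : Fm S n
  | and {n : ℕ} (A B : Fm S n) : Fm S n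
  | or {n : ℕ} (A B : Fm S n) : Fm S n
  | imp {n : ℕ} (A B : Fm S n) : Fm S n
  | all {n : ℕ} (A : Fm S (n + 1)) : Fm S n
  | ex {n : ℕ} (A : Fm S (n + 1)) : Fm S n

/-- Formulae proper: no dangling bound variables (free variables are allowed). -/
abbrev Formula (S : Sig) : Type := Fm S 0

/-- Terms proper: nominal constants and free nominal variables. -/
abbrev Term (S : Sig) : Type := Tm S 0

variable {S : Sig}

namespace Tm

/-- Simultaneous substitution for the bound variables of a term. -/
def subst {n m : ℕ} (σ : Fin n → Tm S m) : Tm S n → Tm S m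
  | .const c => .const c
  | .fvar x => .fvar x
  | .bvar i => σ i

/-- Weakening of a term to the scope of `k` further quantifiers. -/
def weaken {n : ℕ} (k : ℕ) (t : Tm S n) : Tm S (n + k) := t.subst fun i => .bvar (i.addNat k)

/-- A term proper, seen in the scope of `n` quantifiers. -/
def ofTerm {n : ℕ} (t : Term S) : Tm S n := t.subst fun i => i.elim0

/-- Extension of a substitution to the scope of one further quantifier. -/
def up {n m : ℕ} (σ : Fin n → Tm S m) : Fin (n + 1) → Tm S (m + 1) :=
  Fin.cases (.bvar 0) fun i => (σ i).weaken 1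

end Tm

namespace Fm

/-- Simultaneous (capture-free) substitution for the dangling bound variables. -/
def subst : {n m : ℕ} → (Fin n → Tm S m) → Fm S n → Fm S m
  | _, _, σ, .pred s p args => .pred s p fun i => (args i).subst σ
  | _, _, _, .bot => .bot
  | _, _, σ, .and A B => .and (A.subst σ) (B.subst σ)
  | _, _, σ, .or A B => .or (A.subst σ) (B.subst σ)
  | _, _, σ, .imp A B => .imp (A.subst σ) (B.subst σ)
  | _, _, σ, .all A => .all (A.subst (Tm.up σ))
  | _, _, σ, .ex A => .ex (A.subst (Tm.up σ))

/-- `A.inst o` is `A(x/o)`, where `x` is the one dangling bound variable of `A`. -/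
def inst (A : Fm S 1) (o : Term S) : Formula S := A.subst fun _ => o

/-- The term `o` (a nominal constant or a free variable) occurs in the formula. -/
def Has (o : Term S) : {n : ℕ} → Fm S n → Prop
  | _, .pred _ _ args => ∃ i, args i = o.ofTerm
  | _, .bot => False
  | _, .and A B => A.Has o ∨ B.Has o
  | _, .or A B => A.Has o ∨ B.Has o
  | _, .imp A B => A.Has o ∨ B.Has o
  | _, .all A => A.Has o
  | _, .ex A => A.Has o

/-- Defined equivalence. -/
def iff {n : ℕ} (A B : Fm S n) : Fm S n := .and (.imp A B) (.imp B A)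

/-- `A₁ & … & Aₘ`; the empty conjunction is taken to be `⊥ ⊃ ⊥`. -/
def bigAnd {n : ℕ} : List (Fm S n) → Fm S n
  | [] => .imp .bot .bot
  | [A] => A
  | A :: B :: L => .and A (bigAnd (B :: L))

/-- `∀z₁ … ∀zₖ A`. -/
def alls {n : ℕ} : (k : ℕ) → Fm S (n + k) → Fm S n
  | 0, A => A
  | k + 1, A => alls k (.all A)

/-- `p z₁ … o … zₖ`, with `o` at place `j`, in the scope of `∀z₁ … ∀zₖ`
(so `zₖ` is `bvar 0` and `z₁` is `bvar (k - 1)`). -/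
def place {n : ℕ} (s : Pol) (p : S.Pred) (o : Tm S n) (j : Fin (S.arity p)) :
    Fm S (n + S.arity p) :=
  .pred s p fun i =>
    if i = j then o.weaken (S.arity p) else .bvar (i.rev.castLE (Nat.le_add_left _ _))

/-- `P_p(o₁, o₂)` (for `s = pos`) and `N_p(o₁, o₂)` (for `s = neg`): the universal closure of the
conjunction, over all argument places of `p`, of
`±p(… o₁ …) ↔ ±p(… o₂ …)`. -/
def respect {n : ℕ} (s : Pol) (p : S.Pred) (o₁ o₂ : Tm S n) : Fm S n :=
  alls (S.arity p) (bigAnd ((List.finRange (S.arity p)).map fun j =>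
    iff (place s p o₁ j) (place s p o₂ j)))

/-- Qualified identity `o₁ =⁺_Q o₂` (for `s = pos`) and `o₁ =⁻_Q o₂` (for `s = neg`). -/
noncomputable def qid {n : ℕ} (s : Pol) (Q : Finset S.Pred) (o₁ o₂ : Tm S n) : Fm S n :=
  bigAnd (Q.toList.map fun p => respect s p o₁ o₂)

end Fm

/-- The atomic formulae `φ(x)`: they contain at least one occurrence of the variable `x`, which is
the one dangling bound variable. -/
structure AtFm (S : Sig) : Type where
  pred : S.Pred
  args : Fin (S.arity pred) → Tm S 1
  occ : ∃ i, args i = .bvar 0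

namespace AtFm

/-- `φ(x)` or `−φ(x)`. -/
def fm (s : Pol) (φ : AtFm S) : Fm S 1 := .pred s φ.pred φ.args

/-- The clause `∃x ±φ(x)`. -/
def exists_ (s : Pol) (φ : AtFm S) : Formula S := .ex (φ.fm s)

/-- Qualified uniqueness `∀u∀v((±φ(u) & ±φ(v)) ⊃ u =^±_Q v)`, all signs being equal to `s`. -/
noncomputable def unique (s : Pol) (Q : Finset S.Pred) (φ : AtFm S) : Formula S :=
  .all (.all (.imp
    (.and ((φ.fm s).subst fun _ => .bvar 1) ((φ.fm s).subst fun _ => .bvar 0))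
    (Fm.qid s Q (.bvar 1) (.bvar 0))))

/-- The clause `∀w(±φ(w) ⊃ ±ψ(w))`, with sign `s` for `φ` and `t` for `ψ`. -/
def every (s t : Pol) (φ ψ : AtFm S) : Formula S := .all (.imp (φ.fm s) (ψ.fm t))

/-- Qualified definiteness `±ψ(ι_Q x ±φ(x))`, with sign `s` for `φ` and `t` for `ψ`: positive
qualified definiteness for `s = pos`, negative qualified definiteness for `s = neg`. -/
noncomputable def iota (s t : Pol) (Q : Finset S.Pred) (φ ψ : AtFm S) : Formula S :=
  .and (φ.exists_ s) (.and (φ.unique s Q) (every s t φ ψ))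

end AtFm

/-- The formula `p α₁ … αₖ` or `−p α₁ … αₖ`, with nominal constants `αᵢ`. -/
def sent (s : Pol) (p : S.Pred) (as : Fin (S.arity p) → S.Const) : Formula S :=
  .pred s p fun i => .const (as i)

/-- Atomic sentences. -/
structure Atm (S : Sig) : Type where
  pred : S.Pred
  args : Fin (S.arity pred) → S.Const

/-- A subatomic base assigns to every non-logical constant `τ` its set `τΓ` of term assumptions,
which are atomic sentences containing `τ`. -/
structure Base (S : Sig) : Type where
  val : S.Const ⊕ S.Pred → Set (Atm S)
  const_mem : ∀ c, ∀ X ∈ val (.inl c), ∃ i, X.args i = c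
  pred_mem : ∀ p, ∀ X ∈ val (.inr p), X.pred = p

/-- The atomic sentence `X = p α₁ … αₖ` is in `pΓ ∩ α₁Γ ∩ … ∩ αₖΓ`. -/
def Base.Contains (v : Base S) (X : Atm S) : Prop :=
  X ∈ v.val (.inr X.pred) ∧ ∀ i, X ∈ v.val (.inl (X.args i))

/-- The side condition of the introduction rules for atomic sentences (containment) and for
negative predications (negative containment). -/
def Base.Side (v : Base S) : Pol → Atm S → Prop
  | .pos, X => v.Contains X
  | .neg, X => ¬ v.Contains X

/-- The argument lists of mirror atomic sentences `φ(a)` and `φ(b)`: the former contains `a`;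
they are exactly alike except that the former has `a` at all the places at which the latter has
`b`, and vice versa. -/
structure Mirror {k : ℕ} (a b : S.Const) (as bs : Fin k → S.Const) : Prop where
  occ : ∃ i, as i = a
  left : ∀ i, as i = a ↔ bs i = b
  right : ∀ i, as i = b ↔ bs i = a
  alike : ∀ i, as i ≠ a → as i ≠ b → bs i = as i

/-- A unit is a formula or a term assumption `τΓ` (recorded by its constant `τ`). -/
inductive Un (S : Sig) : Type where
  | fm (A : Formula S)
  | ta (τ : S.Const ⊕ S.Pred)

/-- The term `o` occurs in the unit; in `τΓ` it occurs if it is the nominal constant `τ`. -/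
def Un.Has (o : Term S) : Un S → Prop
  | .fm A => A.Has o
  | .ta (.inl c) => o = .const c
  | .ta (.inr _) => False

/-- Derivation trees over the subatomic base `v`, by the unit derived. Assumptions of formulae
carry labels; a discharging rule discharges the assumptions with the given formula and label.
The conditions on the variable or constant `o` in `∀I` and `∃E` are imposed
by `Deriv.EigenOK` below. -/
inductive Deriv (v : Base S) : Un S → Type where
  /-- assumption of a formula -/
  | ass (u : ℕ) (A : Formula S) : Deriv v (.fm A)
  /-- term assumption `τΓ` -/
  | term (τ : S.Const ⊕ S.Pred) : Deriv v (.ta τ)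
  /-- the rule `⊥i` -/
  | botR (A : Formula S) (D : Deriv v (.fm .bot)) : Deriv v (.fm A)
  | andI (A B : Formula S) (D : Deriv v (.fm A)) (E : Deriv v (.fm B)) : Deriv v (.fm (.and A B))
  | andE1 (A B : Formula S) (D : Deriv v (.fm (.and A B))) : Deriv v (.fm A)
  | andE2 (A B : Formula S) (D : Deriv v (.fm (.and A B))) : Deriv v (.fm B)
  | orI1 (A B : Formula S) (D : Deriv v (.fm A)) : Deriv v (.fm (.or A B))
  | orI2 (A B : Formula S) (D : Deriv v (.fm B)) : Deriv v (.fm (.or A B))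
  /-- discharges `A` with label `u` in `E` and `B` with label `w` in `F`;
  the conclusion may be a term assumption -/
  | orE (u w : ℕ) (A B : Formula S) (C : Un S) (D : Deriv v (.fm (.or A B)))
      (E : Deriv v C) (F : Deriv v C) : Deriv v C
  | impI (u : ℕ) (A B : Formula S) (D : Deriv v (.fm B)) : Deriv v (.fm (.imp A B))
  | impE (A B : Formula S) (D : Deriv v (.fm (.imp A B))) (E : Deriv v (.fm A)) : Deriv v (.fm B)
  /-- `∀I` from one premiss `A(x/o)`, `o` a proper variable or a nominal constant -/
  | allI (A : Fm S 1) (o : Term S) (D : Deriv v (.fm (A.inst o))) : Deriv v (.fm (.all A))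
  /-- `∀I` from the premisses `A(x/c)` for all nominal constants `c` -/
  | allIC (A : Fm S 1) (D : ∀ c : S.Const, Deriv v (.fm (A.inst (.const c)))) :
      Deriv v (.fm (.all A))
  | allE (A : Fm S 1) (o : Term S) (D : Deriv v (.fm (.all A))) : Deriv v (.fm (A.inst o))
  | exI (A : Fm S 1) (o : Term S) (D : Deriv v (.fm (A.inst o))) : Deriv v (.fm (.ex A))
  /-- discharges `A(x/o)` with label `u` in `E`; the conclusion may be a term assumption -/
  | exE (u : ℕ) (A : Fm S 1) (o : Term S) (C : Un S) (D : Deriv v (.fm (.ex A)))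
      (E : Deriv v C) : Deriv v C
  /-- `asI` and `−asI` -/
  | asI (s : Pol) (X : Atm S) (side : v.Side s X) (D : Deriv v (.ta (.inr X.pred)))
      (E : ∀ i, Deriv v (.ta (.inl (X.args i)))) : Deriv v (.fm (sent s X.pred X.args))
  /-- `asE₀` and `−asE₀` -/
  | asE0 (s : Pol) (X : Atm S) (D : Deriv v (.fm (sent s X.pred X.args))) :
      Deriv v (.ta (.inr X.pred))
  /-- `asEᵢ` and `−asEᵢ`, for the argument places `i` -/
  | asE (s : Pol) (X : Atm S) (i : Fin (S.arity X.pred))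
      (D : Deriv v (.fm (sent s X.pred X.args))) : Deriv v (.ta (.inl (X.args i)))
  /-- introduction of qualified identity: for all `p` in `Q` and all mirror sentences `±p(a)`,
  `±p(b)`, the latter is derived from the former (discharged, with the label given by `l₁`)
  and conversely (with the label given by `l₂`) -/
  | qidI (s : Pol) (Q : Finset S.Pred) (a b : S.Const)
      (l₁ l₂ : (p : S.Pred) → (Fin (S.arity p) → S.Const) → ℕ)
      (D : ∀ p ∈ Q, ∀ as bs, Mirror a b as bs → Deriv v (.fm (sent s p bs)))
      (E : ∀ p ∈ Q, ∀ as bs, Mirror a b as bs → Deriv v (.fm (sent s p as))) :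
      Deriv v (.fm (Fm.qid s Q (.const a) (.const b)))
  | qidE1 (s : Pol) (Q : Finset S.Pred) (a b : S.Const) (p : S.Pred) (hp : p ∈ Q)
      (as bs : Fin (S.arity p) → S.Const) (h : Mirror a b as bs)
      (D : Deriv v (.fm (Fm.qid s Q (.const a) (.const b))))
      (E : Deriv v (.fm (sent s p as))) : Deriv v (.fm (sent s p bs))
  | qidE2 (s : Pol) (Q : Finset S.Pred) (a b : S.Const) (p : S.Pred) (hp : p ∈ Q)
      (as bs : Fin (S.arity p) → S.Const) (h : Mirror a b as bs)
      (D : Deriv v (.fm (Fm.qid s Q (.const a) (.const b))))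
      (E : Deriv v (.fm (sent s p bs))) : Deriv v (.fm (sent s p as))
  | iotaI (s t : Pol) (Q : Finset S.Pred) (φ ψ : AtFm S) (D : Deriv v (.fm (φ.exists_ s)))
      (E : Deriv v (.fm (φ.unique s Q))) (F : Deriv v (.fm (AtFm.every s t φ ψ))) :
      Deriv v (.fm (AtFm.iota s t Q φ ψ))
  | iotaE1 (s t : Pol) (Q : Finset S.Pred) (φ ψ : AtFm S)
      (D : Deriv v (.fm (AtFm.iota s t Q φ ψ))) : Deriv v (.fm (φ.exists_ s))
  | iotaE2 (s t : Pol) (Q : Finset S.Pred) (φ ψ : AtFm S)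
      (D : Deriv v (.fm (AtFm.iota s t Q φ ψ))) : Deriv v (.fm (φ.unique s Q))
  | iotaE3 (s t : Pol) (Q : Finset S.Pred) (φ ψ : AtFm S)
      (D : Deriv v (.fm (AtFm.iota s t Q φ ψ))) : Deriv v (.fm (AtFm.every s t φ ψ))

/-- Derivation trees, bundled with the unit derived. -/
abbrev Tree (v : Base S) : Type := Σ U : Un S, Deriv v U

namespace Deriv

variable {v : Base S}

/-- The derivations of the premisses of the last rule applied. -/
def prems : {U : Un S} → Deriv v U → Set (Tree v)
  | _, .ass _ _ => ∅
  | _, .term _ => ∅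
  | _, .botR _ D => {⟨_, D⟩}
  | _, .andI _ _ D E => {⟨_, D⟩, ⟨_, E⟩}
  | _, .andE1 _ _ D => {⟨_, D⟩}
  | _, .andE2 _ _ D => {⟨_, D⟩}
  | _, .orI1 _ _ D => {⟨_, D⟩}
  | _, .orI2 _ _ D => {⟨_, D⟩}
  | _, .orE _ _ _ _ _ D E F => {⟨_, D⟩, ⟨_, E⟩, ⟨_, F⟩}
  | _, .impI _ _ _ D => {⟨_, D⟩}
  | _, .impE _ _ D E => {⟨_, D⟩, ⟨_, E⟩}
  | _, .allI _ _ D => {⟨_, D⟩}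
  | _, .allIC _ D => {T | ∃ c, T = ⟨_, D c⟩}
  | _, .allE _ _ D => {⟨_, D⟩}
  | _, .exI _ _ D => {⟨_, D⟩}
  | _, .exE _ _ _ _ D E => {⟨_, D⟩, ⟨_, E⟩}
  | _, .asI _ _ _ D E => {T | T = ⟨_, D⟩ ∨ ∃ i, T = ⟨_, E i⟩}
  | _, .asE0 _ _ D => {⟨_, D⟩}
  | _, .asE _ _ _ D => {⟨_, D⟩}
  | _, .qidI _ _ _ _ _ _ D E =>
      {T | ∃ p hp as bs h, T = ⟨_, D p hp as bs h⟩ ∨ T = ⟨_, E p hp as bs h⟩}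
  | _, .qidE1 _ _ _ _ _ _ _ _ _ D E => {⟨_, D⟩, ⟨_, E⟩}
  | _, .qidE2 _ _ _ _ _ _ _ _ _ D E => {⟨_, D⟩, ⟨_, E⟩}
  | _, .iotaI _ _ _ _ _ D E F => {⟨_, D⟩, ⟨_, E⟩, ⟨_, F⟩}
  | _, .iotaE1 _ _ _ _ _ D => {⟨_, D⟩}
  | _, .iotaE2 _ _ _ _ _ D => {⟨_, D⟩}
  | _, .iotaE3 _ _ _ _ _ D => {⟨_, D⟩}

/-- `Within T R`: the tree `T` is a subderivation of `R` (possibly `R` itself). -/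
inductive Within : Tree v → Tree v → Prop where
  | refl (T : Tree v) : Within T T
  | step {T P R : Tree v} : P ∈ R.2.prems → Within T P → Within T R

/-- The unit `W` occurs in the derivation `D`, as an assumption or as a conclusion of a rule. -/
def Occurs {U : Un S} (D : Deriv v U) (W : Un S) : Prop :=
  ∃ E : Deriv v W, Within ⟨W, E⟩ ⟨U, D⟩

/-- The open (undischarged) assumptions of formulae, with their labels. -/
def opens : {U : Un S} → Deriv v U → Set (ℕ × Formula S)
  | _, .ass u A => {(u, A)}
  | _, .term _ => ∅
  | _, .botR _ D => D.opens
  | _, .andI _ _ D E => D.opens ∪ E.opens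
  | _, .andE1 _ _ D => D.opens
  | _, .andE2 _ _ D => D.opens
  | _, .orI1 _ _ D => D.opens
  | _, .orI2 _ _ D => D.opens
  | _, .orE u w A B _ D E F => D.opens ∪ (E.opens \ {(u, A)}) ∪ (F.opens \ {(w, B)})
  | _, .impI u A _ D => D.opens \ {(u, A)}
  | _, .impE _ _ D E => D.opens ∪ E.opens
  | _, .allI _ _ D => D.opens
  | _, .allIC _ D => ⋃ c, (D c).opens
  | _, .allE _ _ D => D.opens
  | _, .exI _ _ D => D.opens
  | _, .exE u A o _ D E => D.opens ∪ (E.opens \ {(u, A.inst o)})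
  | _, .asI _ _ _ D E => D.opens ∪ ⋃ i, (E i).opens
  | _, .asE0 _ _ D => D.opens
  | _, .asE _ _ _ D => D.opens
  | _, .qidI s _ _ _ l₁ l₂ D E =>
      {x | ∃ p hp as bs h, x ∈ (D p hp as bs h).opens \ {(l₁ p as, sent s p as)} ∨
        x ∈ (E p hp as bs h).opens \ {(l₂ p bs, sent s p bs)}}
  | _, .qidE1 _ _ _ _ _ _ _ _ _ D E => D.opens ∪ E.opens
  | _, .qidE2 _ _ _ _ _ _ _ _ _ D E => D.opens ∪ E.opens
  | _, .iotaI _ _ _ _ _ D E F => D.opens ∪ E.opens ∪ F.opens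
  | _, .iotaE1 _ _ _ _ _ D => D.opens
  | _, .iotaE2 _ _ _ _ _ D => D.opens
  | _, .iotaE3 _ _ _ _ _ D => D.opens

/-- The term `o` is a nominal constant with a term assumption leaf `oΓ` in `D`. -/
def HasTermLeaf {U : Un S} (D : Deriv v U) (o : Term S) : Prop :=
  ∃ c : S.Const, o = .const c ∧ Within ⟨_, .term (.inl c)⟩ ⟨U, D⟩

/-- The side conditions of `∀I` (from one premiss) and of `∃E` for the last rule applied. -/
def EigenOK : {U : Un S} → Deriv v U → Prop
  | _, .allI A o D =>
      ¬ (Fm.all A).Has o ∧ (∀ x ∈ D.opens, ¬ x.2.Has o) ∧ ¬ D.HasTermLeaf o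
  | _, .exE u A o C _ E =>
      ¬ (Fm.ex A).Has o ∧ ¬ C.Has o ∧ (∀ x ∈ E.opens \ {(u, A.inst o)}, ¬ x.2.Has o) ∧
        ¬ E.HasTermLeaf o
  | _, _ => True

/-- The tree is a derivation from the set `Γ` of formulae: every application of `∀I` and `∃E` in
it obeys its side conditions, and all open assumptions of formulae are in `Γ`. (Term assumptions
are given by the base and may always be used.) -/
def IsFrom {U : Un S} (D : Deriv v U) (Γ : Set (Formula S)) : Prop :=
  (∀ T : Tree v, Within T ⟨U, D⟩ → T.2.EigenOK) ∧ ∀ x ∈ D.opens, x.2 ∈ Γ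

/-- The last rule applied is an introduction rule. -/
def IsIntro : {U : Un S} → Deriv v U → Prop
  | _, .andI _ _ _ _ => True
  | _, .orI1 _ _ _ => True
  | _, .orI2 _ _ _ => True
  | _, .impI _ _ _ _ => True
  | _, .allI _ _ _ => True
  | _, .allIC _ _ => True
  | _, .exI _ _ _ => True
  | _, .asI _ _ _ _ _ => True
  | _, .qidI _ _ _ _ _ _ _ _ => True
  | _, .iotaI _ _ _ _ _ _ _ _ => True
  | _, _ => False

/-- The last rule applied is `⊥i`. -/
def IsBot : {U : Un S} → Deriv v U → Prop
  | _, .botR _ _ => True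
  | _, _ => False

/-- The last rule applied is `∨E` or `∃E`. -/
def IsOrExE : {U : Un S} → Deriv v U → Prop
  | _, .orE _ _ _ _ _ _ _ _ => True
  | _, .exE _ _ _ _ _ _ => True
  | _, _ => False

/-- `D.Major T`: the last rule of `D` is an elimination rule and `T` derives its major premiss. -/
def Major : {U : Un S} → Deriv v U → Tree v → Prop
  | _, .andE1 _ _ D, T => T = ⟨_, D⟩
  | _, .andE2 _ _ D, T => T = ⟨_, D⟩
  | _, .orE _ _ _ _ _ D _ _, T => T = ⟨_, D⟩
  | _, .impE _ _ D _, T => T = ⟨_, D⟩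
  | _, .allE _ _ D, T => T = ⟨_, D⟩
  | _, .exE _ _ _ _ D _, T => T = ⟨_, D⟩
  | _, .asE0 _ _ D, T => T = ⟨_, D⟩
  | _, .asE _ _ _ D, T => T = ⟨_, D⟩
  | _, .qidE1 _ _ _ _ _ _ _ _ _ D _, T => T = ⟨_, D⟩
  | _, .qidE2 _ _ _ _ _ _ _ _ _ D _, T => T = ⟨_, D⟩
  | _, .iotaE1 _ _ _ _ _ D, T => T = ⟨_, D⟩
  | _, .iotaE2 _ _ _ _ _ D, T => T = ⟨_, D⟩
  | _, .iotaE3 _ _ _ _ _ D, T => T = ⟨_, D⟩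
  | _, _, _ => False

/-- The major premiss of the last rule is maximal: it is the conclusion of an introduction rule
or of `⊥i`. (Qualified identity and definiteness formulae are literally the formulae that define
them, so an introduction rule for them may also meet an elimination rule for the principal
operator of the defining formula, and conversely; such detours are included.) -/
def MaximalAt {U : Un S} (D : Deriv v U) : Prop :=
  ∃ T : Tree v, D.Major T ∧ (T.2.IsIntro ∨ T.2.IsBot)

/-- Permutative detour: the major premiss of the last rule is the conclusion of `∨E` or `∃E`. -/
def PermutativeAt {U : Un S} (D : Deriv v U) : Prop :=
  ∃ T : Tree v, D.Major T ∧ T.2.IsOrExE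

/-- Simplifiable detour: the last rule is `∨E` or `∃E`, and in the derivation of one of its minor
premisses no assumption is discharged. -/
def SimplifiableAt : {U : Un S} → Deriv v U → Prop
  | _, .orE u w A B _ _ E F => (u, A) ∉ E.opens ∨ (w, B) ∉ F.opens
  | _, .exE u A o _ _ E => (u, A.inst o) ∉ E.opens
  | _, _ => False

/-- Normal derivations: no maximal formula, no permutative and no simplifiable detour. -/
def Normal {U : Un S} (D : Deriv v U) : Prop :=
  ∀ T : Tree v, Within T ⟨U, D⟩ →
    ¬ T.2.MaximalAt ∧ ¬ T.2.PermutativeAt ∧ ¬ T.2.SimplifiableAt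

end Deriv

/-- `Subformula A B`: `A` is a subformula of `B`, where the immediate subformulae of `∀xB` and
`∃xB` are all the instances `B(x/o)`. -/
inductive Subformula : Formula S → Formula S → Prop where
  | refl (A : Formula S) : Subformula A A
  | andL {A B C : Formula S} : Subformula A B → Subformula A (.and B C)
  | andR {A B C : Formula S} : Subformula A C → Subformula A (.and B C)
  | orL {A B C : Formula S} : Subformula A B → Subformula A (.or B C)
  | orR {A B C : Formula S} : Subformula A C → Subformula A (.or B C)
  | impL {A B C : Formula S} : Subformula A B → Subformula A (.imp B C)
  | impR {A B C : Formula S} : Subformula A C → Subformula A (.imp B C)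
  | all {A : Formula S} {B : Fm S 1} (o : Term S) : Subformula A (B.inst o) → Subformula A (.all B)
  | ex {A : Formula S} {B : Fm S 1} (o : Term S) : Subformula A (B.inst o) → Subformula A (.ex B)

end QDef

namespace QDef

variable {S : Sig}

namespace Tm

theorem subst_bvar {n : ℕ} (t : Tm S n) : t.subst Tm.bvar = t := by
  cases t <;> rfl

theorem subst_subst {n m k : ℕ} (σ : Fin n → Tm S m) (τ : Fin m → Tm S k) (t : Tm S n) :
    (t.subst σ).subst τ = t.subst fun i => (σ i).subst τ := by
  cases t <;> rfl

theorem up_bvar {n : ℕ} : up (Tm.bvar : Fin n → Tm S n) = Tm.bvar := by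
  funext i
  refine Fin.cases rfl (fun i => ?_) i
  rfl

theorem up_subst_up {n m k : ℕ} (σ : Fin n → Tm S m) (τ : Fin m → Tm S k) :
    (fun i => (up σ i).subst (up τ)) = up fun i => (σ i).subst τ := by
  funext i
  refine Fin.cases rfl (fun i => ?_) i
  change ((σ i).weaken 1).subst (up τ) = ((σ i).subst τ).weaken 1
  unfold weaken
  rw [subst_subst, subst_subst]
  rfl

end Tm

namespace Fm

theorem subst_bvar {n : ℕ} (A : Fm S n) : A.subst Tm.bvar = A := by
  induction A <;> simp_all [subst, Tm.subst_bvar, Tm.up_bvar]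

theorem subst_subst {n m k : ℕ} (A : Fm S n) (σ : Fin n → Tm S m) (τ : Fin m → Tm S k) :
    (A.subst σ).subst τ = A.subst fun i => (σ i).subst τ := by
  induction A generalizing m k <;> simp_all [subst, Tm.subst_subst, Tm.up_subst_up]

theorem bigAnd_ne_bot {n : ℕ} {L : List (Fm S n)} (h : ∀ A ∈ L, A ≠ .bot) :
    bigAnd L ≠ .bot := by
  match L with
  | [] => simp [bigAnd]
  | [A] => exact h A (by simp)
  | A :: B :: L => simp [bigAnd]

theorem alls_ne_bot {n k : ℕ} {A : Fm S (n + k)} (h : A ≠ .bot) : alls k A ≠ .bot := by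
  induction k with
  | zero => exact h
  | succ k ih => exact ih (A := .all A) (by simp)

theorem qid_ne_bot {n : ℕ} (s : Pol) (Q : Finset S.Pred) (o₁ o₂ : Tm S n) :
    qid s Q o₁ o₂ ≠ .bot := by
  refine bigAnd_ne_bot fun A hA => ?_
  obtain ⟨p, -, rfl⟩ := List.mem_map.1 hA
  refine alls_ne_bot (bigAnd_ne_bot fun B hB => ?_)
  obtain ⟨j, -, rfl⟩ := List.mem_map.1 hB
  simp [iff]

/-- Placing `b` at a place where `b` stands anyway, and instantiating the other places. -/
theorem place_subst (s : Pol) (p : S.Pred) (bs : Fin (S.arity p) → S.Const)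
    (j : Fin (S.arity p)) :
    (place (n := 0) s p (.const (bs j)) j).subst
      (fun i => .const (bs (Fin.rev (i.cast (Nat.zero_add _))))) = sent s p bs := by
  unfold place sent subst
  congr 1
  funext i
  by_cases h : i = j
  · subst h
    simp [Tm.weaken, Tm.subst]
  · have : Fin.cast (Nat.zero_add _) (Fin.castLE (Nat.le_add_left (S.arity p) 0) i.rev) = i.rev :=
      rfl
    simp only [h, if_false, Tm.subst, this, Fin.rev_rev]

end Fm

namespace Subformula

theorem trans {A B C : Formula S} (h : Subformula A B) (h' : Subformula B C) :
    Subformula A C := by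
  induction h' with
  | refl => exact h
  | andL _ ih => exact ih.andL
  | andR _ ih => exact ih.andR
  | orL _ ih => exact ih.orL
  | orR _ ih => exact ih.orR
  | impL _ ih => exact ih.impL
  | impR _ ih => exact ih.impR
  | all o _ ih => exact ih.all o
  | ex o _ ih => exact ih.ex o

theorem bigAnd_subst {n : ℕ} (σ : Fin n → Term S) {A : Fm S n} {L : List (Fm S n)}
    (hA : A ∈ L) : Subformula (A.subst σ) ((Fm.bigAnd L).subst σ) := by
  match L with
  | [] => simp at hA
  | [B] =>
    obtain rfl : A = B := by simpa using hA
    exact .refl _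
  | B :: C :: L =>
    rcases List.mem_cons.1 hA with rfl | hA
    · exact .andL (.refl _)
    · exact .andR (bigAnd_subst σ hA)

theorem bigAnd {A : Formula S} {L : List (Formula S)} (hA : A ∈ L) :
    Subformula A (Fm.bigAnd L) := by
  simpa only [Fm.subst_bvar] using bigAnd_subst Tm.bvar hA

theorem alls {k : ℕ} (A : Fm S (0 + k)) (σ : Fin (0 + k) → Term S) :
    Subformula (A.subst σ) (Fm.alls k A) := by
  induction k with
  | zero =>
    obtain rfl : σ = Tm.bvar := funext fun i => i.elim0
    rw [Fm.subst_bvar]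
    exact .refl _
  | succ k ih =>
    refine trans ?_ (ih (.all A) fun i => σ i.succ)
    refine .all (σ 0) ?_
    have : (A.subst (Tm.up fun i => σ i.succ)).inst (σ 0) = A.subst σ := by
      unfold Fm.inst
      rw [Fm.subst_subst]
      congr 1
      funext i
      refine Fin.cases rfl (fun i => ?_) i
      change ((σ i.succ).weaken 1).subst _ = σ i.succ
      unfold Tm.weaken
      rw [Tm.subst_subst]
      conv_rhs => rw [← Tm.subst_bvar (σ i.succ)]
      congr 1
      funext i
      exact i.elim0
    exact this ▸ .refl _

theorem respect {s : Pol} {Q : Finset S.Pred} {p : S.Pred} (hp : p ∈ Q) (o₁ o₂ : Term S) :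
    Subformula (Fm.respect s p o₁ o₂) (Fm.qid s Q o₁ o₂) :=
  bigAnd (List.mem_map.2 ⟨p, by simpa using hp, rfl⟩)

theorem iff_place (s : Pol) (p : S.Pred) (o₁ o₂ : Term S) (j : Fin (S.arity p))
    (σ : Fin (0 + S.arity p) → Term S) :
    Subformula ((Fm.iff (Fm.place s p o₁ j) (Fm.place s p o₂ j)).subst σ)
      (Fm.respect s p o₁ o₂) :=
  trans (bigAnd_subst σ (List.mem_map.2 ⟨j, List.mem_finRange j, rfl⟩)) (alls _ σ)

theorem qid_left {s : Pol} {Q : Finset S.Pred} {p : S.Pred} (hp : p ∈ Q) {a b : S.Const}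
    {as bs : Fin (S.arity p) → S.Const} (h : Mirror a b as bs) :
    Subformula (sent s p as) (Fm.qid s Q (.const a) (.const b)) := by
  obtain ⟨j, rfl⟩ := h.occ
  refine trans ?_ (respect hp _ _)
  refine trans ?_ (iff_place s p _ _ j
    fun i => .const (as (Fin.rev (i.cast (Nat.zero_add _)))))
  refine .andL (.impL ?_)
  rw [Fm.place_subst]
  exact .refl _

theorem qid_right {s : Pol} {Q : Finset S.Pred} {p : S.Pred} (hp : p ∈ Q) {a b : S.Const}
    {as bs : Fin (S.arity p) → S.Const} (h : Mirror a b as bs) :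
    Subformula (sent s p bs) (Fm.qid s Q (.const a) (.const b)) := by
  obtain ⟨j, hj⟩ := h.occ
  obtain rfl := (h.left j).1 hj
  refine trans ?_ (respect hp _ _)
  refine trans ?_ (iff_place s p _ _ j
    fun i => .const (bs (Fin.rev (i.cast (Nat.zero_add _)))))
  refine .andL (.impR ?_)
  rw [Fm.place_subst]
  exact .refl _

end Subformula

namespace Deriv

variable {v : Base S}

/-- All formulae occurring in the derivation satisfy `P`. -/
def AllFm (P : Formula S → Prop) {U : Un S} (D : Deriv v U) : Prop :=
  ∀ B, D.Occurs (.fm B) → P B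

theorem AllFm.concl {P : Formula S → Prop} {A : Formula S} {D : Deriv v (.fm A)}
    (h : D.AllFm P) : P A :=
  h A ⟨D, .refl _⟩

theorem AllFm.of_prems {P : Formula S → Prop} {U : Un S} {D : Deriv v U}
    (hU : ∀ A, U = .fm A → P A) (hD : ∀ T ∈ D.prems, T.2.AllFm P) : D.AllFm P := by
  rintro B ⟨E, hE⟩
  generalize hT : (⟨.fm B, E⟩ : Tree v) = T at hE
  generalize hR : (⟨U, D⟩ : Tree v) = R at hE
  cases hE with
  | refl =>
    subst hR
    cases hT
    exact hU B rfl
  | step hP hW =>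
    subst hR hT
    exact hD _ hP B ⟨E, hW⟩

theorem Normal.prem {U : Un S} {D : Deriv v U} (h : D.Normal) {T : Tree v} (hT : T ∈ D.prems) :
    T.2.Normal :=
  fun R hR => h R (.step hT hR)

/-- The last rule is an elimination rule other than `∨E` and `∃E`, or there is none. -/
def Neutral {U : Un S} (D : Deriv v U) : Prop :=
  ¬ D.IsIntro ∧ ¬ D.IsBot ∧ ¬ D.IsOrExE

theorem Normal.neutral {U : Un S} {D : Deriv v U} (h : D.Normal) {T : Tree v} (hT : D.Major T) :
    T.2.Neutral := by
  obtain ⟨h₁, h₂, -⟩ := h ⟨U, D⟩ (.refl _)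
  exact ⟨fun hi => h₁ ⟨T, hT, .inl hi⟩, fun hi => h₁ ⟨T, hT, .inr hi⟩, fun hi => h₂ ⟨T, hT, hi⟩⟩

/-- A set of formulae that contains all the subformulae of its members and all the open
assumptions of a normal derivation contains every formula of the derivation, if the latter
derives a term assumption, `⊥` or a member of the set, or ends with a neutral rule. -/
theorem Normal.allFm {P : Formula S → Prop} (hP : ∀ {A B}, Subformula A B → P B → P A)
    {U : Un S} {D : Deriv v U} (hN : D.Normal) (ho : ∀ x ∈ D.opens, P x.2)
    (hU : ∀ A, U = .fm A → P A ∨ A = .bot ∨ D.Neutral) : D.AllFm P := by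
  have hc : ∀ {A : Formula S}, P A → ∀ B, Un.fm A = .fm B → P B := by
    rintro A h B e
    cases e
    exact h
  have hI : ∀ {A : Formula S} {D : Deriv v (.fm A)},
      (∀ B, Un.fm A = .fm B → P B ∨ B = .bot ∨ D.Neutral) → D.IsIntro → A ≠ .bot → P A :=
    fun h hi hb => (h _ rfl).elim id fun h => h.elim (fun h => (hb h).elim) fun h => (h.1 hi).elim
  have hp : ∀ {A : Formula S} {D : Deriv v (.fm A)}, P A →
      ∀ B, Un.fm A = .fm B → P B ∨ B = .bot ∨ D.Neutral := fun h B e => .inl (hc h B e)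
  have ht : ∀ {τ} {D : Deriv v (.ta τ)} (B : Formula S), Un.ta τ = .fm B →
      P B ∨ B = .bot ∨ D.Neutral := fun B e => by cases e
  have hm : ∀ {U : Un S} {D : Deriv v U}, D.Neutral →
      ∀ B, U = .fm B → P B ∨ B = .bot ∨ D.Neutral := fun h _ _ => .inr (.inr h)
  induction D with
  | ass u A => exact .of_prems (hc (ho _ rfl)) (by rintro _ ⟨⟩)
  | term τ => exact .of_prems (by rintro _ ⟨⟩) (by rintro _ ⟨⟩)
  | botR A D ih =>
    have h := ih (hN.prem (T := ⟨_, D⟩) rfl) ho (by rintro _ ⟨⟩; exact .inr (.inl rfl))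
    refine .of_prems (fun B e => ?_) (by rintro _ rfl; exact h)
    rcases hU B e with h' | rfl | h'
    · exact h'
    · exact h.concl
    · exact (h'.2.1 trivial).elim
  | andI A B D E ihD ihE =>
    have h := hI hU trivial (by simp)
    refine .of_prems (hc h) ?_
    rintro _ (rfl | rfl)
    · exact ihD (hN.prem (T := ⟨_, D⟩) (.inl rfl)) (fun x hx => ho x (.inl hx))
        (hp (hP (.andL (.refl _)) h))
    · exact ihE (hN.prem (T := ⟨_, E⟩) (.inr rfl)) (fun x hx => ho x (.inr hx))
        (hp (hP (.andR (.refl _)) h))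
  | andE1 A B D ih =>
    have h := ih (hN.prem (T := ⟨_, D⟩) rfl) ho (hm (hN.neutral (T := ⟨_, D⟩) rfl))
    exact .of_prems (hc (hP (.andL (.refl _)) h.concl)) (by rintro _ rfl; exact h)
  | andE2 A B D ih =>
    have h := ih (hN.prem (T := ⟨_, D⟩) rfl) ho (hm (hN.neutral (T := ⟨_, D⟩) rfl))
    exact .of_prems (hc (hP (.andR (.refl _)) h.concl)) (by rintro _ rfl; exact h)
  | orI1 A B D ih =>
    have h := hI hU trivial (by simp)
    refine .of_prems (hc h) ?_
    rintro _ rfl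
    exact ih (hN.prem (T := ⟨_, D⟩) rfl) ho (hp (hP (.orL (.refl _)) h))
  | orI2 A B D ih =>
    have h := hI hU trivial (by simp)
    refine .of_prems (hc h) ?_
    rintro _ rfl
    exact ih (hN.prem (T := ⟨_, D⟩) rfl) ho (hp (hP (.orR (.refl _)) h))
  | orE u w A B C D E F ihD ihE ihF =>
    have h := ihD (hN.prem (T := ⟨_, D⟩) (.inl rfl)) (fun x hx => ho x (.inl (.inl hx)))
      (hm (hN.neutral (T := ⟨_, D⟩) rfl))
    have hC : ∀ X, C = .fm X → P X ∨ X = .bot := fun X e =>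
      (hU X e).imp_right fun h' => h'.resolve_right fun h' => h'.2.2 trivial
    have hE := ihE (hN.prem (T := ⟨_, E⟩) (.inr (.inl rfl)))
      (fun x hx => by
        by_cases e : x = (u, A)
        · exact e ▸ hP (.orL (.refl _)) h.concl
        · exact ho x (.inl (.inr ⟨hx, e⟩)))
      fun X e => (hC X e).imp_right .inl
    have hF := ihF (hN.prem (T := ⟨_, F⟩) (.inr (.inr rfl)))
      (fun x hx => by
        by_cases e : x = (w, B)
        · exact e ▸ hP (.orR (.refl _)) h.concl
        · exact ho x (.inr ⟨hx, e⟩))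
      fun X e => (hC X e).imp_right .inl
    refine .of_prems ?_ (by rintro _ (rfl | rfl | rfl) <;> assumption)
    rintro X rfl
    exact hE.concl
  | impI u A B D ih =>
    have h := hI hU trivial (by simp)
    refine .of_prems (hc h) ?_
    rintro _ rfl
    refine ih (hN.prem (T := ⟨_, D⟩) rfl) (fun x hx => ?_) (hp (hP (.impR (.refl _)) h))
    by_cases e : x = (u, A)
    · exact e ▸ hP (.impL (.refl _)) h
    · exact ho x ⟨hx, e⟩
  | impE A B D E ihD ihE =>
    have h := ihD (hN.prem (T := ⟨_, D⟩) (.inl rfl)) (fun x hx => ho x (.inl hx))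
      (hm (hN.neutral (T := ⟨_, D⟩) rfl))
    have hE := ihE (hN.prem (T := ⟨_, E⟩) (.inr rfl)) (fun x hx => ho x (.inr hx))
      (hp (hP (.impL (.refl _)) h.concl))
    exact .of_prems (hc (hP (.impR (.refl _)) h.concl))
      (by rintro _ (rfl | rfl) <;> assumption)
  | allI A o D ih =>
    have h := hI hU trivial (by simp)
    refine .of_prems (hc h) ?_
    rintro _ rfl
    exact ih (hN.prem (T := ⟨_, D⟩) rfl) ho (hp (hP (.all o (.refl _)) h))
  | allIC A D ih =>
    have h := hI hU trivial (by simp)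
    refine .of_prems (hc h) ?_
    rintro _ ⟨c, rfl⟩
    exact ih c (hN.prem (T := ⟨_, D c⟩) ⟨c, rfl⟩)
      (fun x hx => ho x (Set.mem_iUnion.2 ⟨c, hx⟩)) (hp (hP (.all (.const c) (.refl _)) h))
  | allE A o D ih =>
    have h := ih (hN.prem (T := ⟨_, D⟩) rfl) ho (hm (hN.neutral (T := ⟨_, D⟩) rfl))
    exact .of_prems (hc (hP (.all o (.refl _)) h.concl)) (by rintro _ rfl; exact h)
  | exI A o D ih =>
    have h := hI hU trivial (by simp)
    refine .of_prems (hc h) ?_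
    rintro _ rfl
    exact ih (hN.prem (T := ⟨_, D⟩) rfl) ho (hp (hP (.ex o (.refl _)) h))
  | exE u A o C D E ihD ihE =>
    have h := ihD (hN.prem (T := ⟨_, D⟩) (.inl rfl)) (fun x hx => ho x (.inl hx))
      (hm (hN.neutral (T := ⟨_, D⟩) rfl))
    have hE := ihE (hN.prem (T := ⟨_, E⟩) (.inr rfl))
      (fun x hx => by
        by_cases e : x = (u, A.inst o)
        · exact e ▸ hP (.ex o (.refl _)) h.concl
        · exact ho x (.inr ⟨hx, e⟩))
      fun X e => (hU X e).imp_right fun h' => .inl (h'.resolve_right fun h' => h'.2.2 trivial)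
    refine .of_prems ?_ (by rintro _ (rfl | rfl) <;> assumption)
    rintro X rfl
    exact hE.concl
  | asI s X side D E ihD ihE =>
    refine .of_prems (hc (hI hU trivial (by simp [sent]))) ?_
    rintro _ (rfl | ⟨i, rfl⟩)
    · exact ihD (hN.prem (T := ⟨_, D⟩) (.inl rfl)) (fun x hx => ho x (.inl hx)) ht
    · exact ihE i (hN.prem (T := ⟨_, E i⟩) (.inr ⟨i, rfl⟩))
        (fun x hx => ho x (.inr (Set.mem_iUnion.2 ⟨i, hx⟩))) ht
  | asE0 s X D ih =>
    have h := ih (hN.prem (T := ⟨_, D⟩) rfl) ho (hm (hN.neutral (T := ⟨_, D⟩) rfl))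
    exact .of_prems (by rintro _ ⟨⟩) (by rintro _ rfl; exact h)
  | asE s X i D ih =>
    have h := ih (hN.prem (T := ⟨_, D⟩) rfl) ho (hm (hN.neutral (T := ⟨_, D⟩) rfl))
    exact .of_prems (by rintro _ ⟨⟩) (by rintro _ rfl; exact h)
  | qidI s Q a b l₁ l₂ D E ihD ihE =>
    have h := hI hU trivial (Fm.qid_ne_bot _ _ _ _)
    refine .of_prems (hc h) ?_
    rintro _ ⟨p, hpQ, as, bs, hM, rfl | rfl⟩
    · refine ihD p hpQ as bs hM (hN.prem (T := ⟨_, D p hpQ as bs hM⟩)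
        ⟨p, hpQ, as, bs, hM, .inl rfl⟩) (fun x hx => ?_) (hp (hP (.qid_right hpQ hM) h))
      by_cases e : x = (l₁ p as, sent s p as)
      · exact e ▸ hP (.qid_left hpQ hM) h
      · exact ho x ⟨p, hpQ, as, bs, hM, .inl ⟨hx, e⟩⟩
    · refine ihE p hpQ as bs hM (hN.prem (T := ⟨_, E p hpQ as bs hM⟩)
        ⟨p, hpQ, as, bs, hM, .inr rfl⟩) (fun x hx => ?_) (hp (hP (.qid_left hpQ hM) h))
      by_cases e : x = (l₂ p bs, sent s p bs)
      · exact e ▸ hP (.qid_right hpQ hM) h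
      · exact ho x ⟨p, hpQ, as, bs, hM, .inr ⟨hx, e⟩⟩
  | qidE1 s Q a b p hpQ as bs hM D E ihD ihE =>
    have h := ihD (hN.prem (T := ⟨_, D⟩) (.inl rfl)) (fun x hx => ho x (.inl hx))
      (hm (hN.neutral (T := ⟨_, D⟩) rfl))
    have hE := ihE (hN.prem (T := ⟨_, E⟩) (.inr rfl)) (fun x hx => ho x (.inr hx))
      (hp (hP (.qid_left hpQ hM) h.concl))
    exact .of_prems (hc (hP (.qid_right hpQ hM) h.concl))
      (by rintro _ (rfl | rfl) <;> assumption)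
  | qidE2 s Q a b p hpQ as bs hM D E ihD ihE =>
    have h := ihD (hN.prem (T := ⟨_, D⟩) (.inl rfl)) (fun x hx => ho x (.inl hx))
      (hm (hN.neutral (T := ⟨_, D⟩) rfl))
    have hE := ihE (hN.prem (T := ⟨_, E⟩) (.inr rfl)) (fun x hx => ho x (.inr hx))
      (hp (hP (.qid_right hpQ hM) h.concl))
    exact .of_prems (hc (hP (.qid_left hpQ hM) h.concl))
      (by rintro _ (rfl | rfl) <;> assumption)
  | iotaI s t Q φ ψ D E F ihD ihE ihF =>
    have h := hI hU trivial (by simp [AtFm.iota])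
    refine .of_prems (hc h) ?_
    rintro _ (rfl | rfl | rfl)
    · exact ihD (hN.prem (T := ⟨_, D⟩) (.inl rfl)) (fun x hx => ho x (.inl (.inl hx)))
        (hp (hP (.andL (.refl _)) h))
    · exact ihE (hN.prem (T := ⟨_, E⟩) (.inr (.inl rfl))) (fun x hx => ho x (.inl (.inr hx)))
        (hp (hP (.andR (.andL (.refl _))) h))
    · exact ihF (hN.prem (T := ⟨_, F⟩) (.inr (.inr rfl))) (fun x hx => ho x (.inr hx))
        (hp (hP (.andR (.andR (.refl _))) h))
  | iotaE1 s t Q φ ψ D ih =>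
    have h := ih (hN.prem (T := ⟨_, D⟩) rfl) ho (hm (hN.neutral (T := ⟨_, D⟩) rfl))
    exact .of_prems (hc (hP (.andL (.refl _)) h.concl)) (by rintro _ rfl; exact h)
  | iotaE2 s t Q φ ψ D ih =>
    have h := ih (hN.prem (T := ⟨_, D⟩) rfl) ho (hm (hN.neutral (T := ⟨_, D⟩) rfl))
    exact .of_prems (hc (hP (.andR (.andL (.refl _))) h.concl)) (by rintro _ rfl; exact h)
  | iotaE3 s t Q φ ψ D ih =>
    have h := ih (hN.prem (T := ⟨_, D⟩) rfl) ho (hm (hN.neutral (T := ⟨_, D⟩) rfl))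
    exact .of_prems (hc (hP (.andR (.andR (.refl _))) h.concl)) (by rintro _ rfl; exact h)

end Deriv

end QDef

theorem subformula_property {S : QDef.Sig} (v : QDef.Base S) (Γ : Set (QDef.Formula S))
    (A : QDef.Formula S) (D : QDef.Deriv v (.fm A)) (hD : D.IsFrom Γ) (hN : D.Normal)
    (B : QDef.Formula S) (hB : D.Occurs (.fm B)) :
    ∃ C ∈ Γ ∪ {A}, QDef.Subformula B C := by
  refine hN.allFm (P := fun B => ∃ C ∈ Γ ∪ {A}, QDef.Subformula B C) ?_ ?_ ?_ B hB
  · rintro A B h ⟨C, hC, h'⟩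
    exact ⟨C, hC, h.trans h'⟩
  · exact fun x hx => ⟨x.2, .inl (hD.2 x hx), .refl _⟩
  · rintro B hB
    cases hB
    exact .inl ⟨A, .inr rfl, .refl _⟩
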